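/- Let G be a connected graph with at least 3 vertices and at least 3 edges. Then κ_3(L(G)) ≥ λ_3(G). -/

import Mathlib

open SimpleGraph

variable {V : Type*}

/-- `T` is an `S`-Steiner tree in `G`: a subgraph of `G` that is a tree containing `S`. -/
def IsSteinerTree (G : SimpleGraph V) (S : Set V) (T : G.Subgraph) : Prop :=
  T.coe.IsTree ∧ S ⊆ T.verts

/-- There exist `n` pairwise edge-disjoint `S`-Steiner trees in `G`. -/
def EdgeDisjointPacking (G : SimpleGraph V) (S : Set V) (n : ℕ) : Prop :=
  ∃ F : Fin n → G.Subgraph, (∀ i, IsSteinerTree G S (F i)) ∧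
    ∀ i j, i ≠ j → Disjoint (F i).edgeSet (F j).edgeSet

/-- There exist `n` pairwise internally disjoint `S`-Steiner trees in `G`. -/
def InternallyDisjointPacking (G : SimpleGraph V) (S : Set V) (n : ℕ) : Prop :=
  ∃ F : Fin n → G.Subgraph, (∀ i, IsSteinerTree G S (F i)) ∧
    ∀ i j, i ≠ j →
      Disjoint (F i).edgeSet (F j).edgeSet ∧ (F i).verts ∩ (F j).verts = S

/-- `λ_G(S)`: the maximum number of pairwise edge-disjoint `S`-Steiner trees. -/
noncomputable def steinerLambda (G : SimpleGraph V) (S : Set V) : ℕ :=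
  sSup {n | EdgeDisjointPacking G S n}

/-- `κ_G(S)`: the maximum number of pairwise internally disjoint `S`-Steiner trees. -/
noncomputable def steinerKappa (G : SimpleGraph V) (S : Set V) : ℕ :=
  sSup {n | InternallyDisjointPacking G S n}

/-- `λ_k(G)`: the `k`-tree edge-connectivity of `G`. -/
noncomputable def treeEdgeConn (G : SimpleGraph V) (k : ℕ) : ℕ :=
  sInf {m | ∃ S : Set V, S.ncard = k ∧ m = steinerLambda G S}

/-- `κ_k(G)`: the `k`-tree connectivity of `G`. -/
noncomputable def treeConn (G : SimpleGraph V) (k : ℕ) : ℕ :=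
  sInf {m | ∃ S : Set V, S.ncard = k ∧ m = steinerKappa G S}

/-- Three distinct edges have distinct representatives. -/
lemma exists_sdr (G : SimpleGraph V) (S : Set G.edgeSet) (hS : S.ncard = 3) :
    ∃ u : G.edgeSet → V, (∀ e ∈ S, u e ∈ e.1) ∧ Set.InjOn u S := by
  classical
  obtain ⟨a, b, c, hab, hac, hbc, rfl⟩ := Set.ncard_eq_three.mp hS
  have key : ∃ x y z : V, x ∈ a.1 ∧ y ∈ b.1 ∧ z ∈ c.1 ∧ x ≠ y ∧ x ≠ z ∧ y ≠ z := by
    obtain ⟨a, ha⟩ := a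
    obtain ⟨b, hb⟩ := b
    obtain ⟨c, hc⟩ := c
    induction a with | _ a1 a2
    induction b with | _ b1 b2
    induction c with | _ c1 c2
    have h1 := G.ne_of_adj ha
    have h2 := G.ne_of_adj hb
    have h3 := G.ne_of_adj hc
    simp only [ne_eq, Subtype.mk.injEq, Sym2.eq_iff] at hab hac hbc
    simp only [Sym2.mem_iff]
    by_contra hcon
    push Not at hcon
    have k1 := hcon a1 b1 c1
    have k2 := hcon a1 b1 c2
    have k3 := hcon a1 b2 c1
    have k4 := hcon a1 b2 c2
    have k5 := hcon a2 b1 c1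
    have k6 := hcon a2 b1 c2
    have k7 := hcon a2 b2 c1
    have k8 := hcon a2 b2 c2
    clear hcon hS ha hb hc
    grind
  obtain ⟨x, y, z, hx, hy, hz, hxy, hxz, hyz⟩ := key
  refine ⟨fun e => if e = a then x else if e = b then y else z, ?_, ?_⟩
  · rintro e (rfl | rfl | rfl)
    · simpa using hx
    · simpa [hab.symm] using hy
    · simpa [hac.symm, hbc.symm] using hz
  · rintro e (rfl | rfl | rfl) f (rfl | rfl | rfl) <;>
      simp [*, Ne.symm hab, Ne.symm hac, Ne.symm hbc, Ne.symm hxy, Ne.symm hxz, Ne.symm hyz]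

/-- The subgraph of the line graph built from a subgraph `T` of `G` and a set `S` of edges with
representatives `u`. -/
def lineSub (G : SimpleGraph V) (S : Set G.edgeSet) (u : G.edgeSet → V) (T : G.Subgraph) :
    G.lineGraph.Subgraph where
  verts := {e | e.1 ∈ T.edgeSet} ∪ S
  Adj e f := G.lineGraph.Adj e f ∧ ((e.1 ∈ T.edgeSet ∧ f.1 ∈ T.edgeSet) ∨
    (e.1 ∈ T.edgeSet ∧ f ∈ S ∧ u f ∈ e.1) ∨ (f.1 ∈ T.edgeSet ∧ e ∈ S ∧ u e ∈ f.1))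
  adj_sub h := h.1
  edge_vert := by
    rintro e f ⟨_, h | h | h⟩
    · exact Or.inl h.1
    · exact Or.inl h.1
    · exact Or.inr h.2.1
  symm := ⟨by
    rintro e f ⟨h, h' | h' | h'⟩
    · exact ⟨h.symm, Or.inl h'.symm⟩
    · exact ⟨h.symm, Or.inr (Or.inr h')⟩
    · exact ⟨h.symm, Or.inr (Or.inl h')⟩⟩

lemma lineSub_reach_same (G : SimpleGraph V) (S : Set G.edgeSet) (u : G.edgeSet → V)
    (T : G.Subgraph) (x : V) (e f : (lineSub G S u T).verts)
    (he : e.1.1 ∈ T.edgeSet) (hf : f.1.1 ∈ T.edgeSet) (hxe : x ∈ e.1.1) (hxf : x ∈ f.1.1) :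
    (lineSub G S u T).coe.Reachable e f := by
  by_cases h : e = f
  · rw [h]
  · refine SimpleGraph.Adj.reachable ?_
    exact ⟨⟨fun h' => h (Subtype.ext h'), x, hxe, hxf⟩, Or.inl ⟨he, hf⟩⟩

lemma lineSub_reach (G : SimpleGraph V) (S : Set G.edgeSet) (u : G.edgeSet → V)
    (T : G.Subgraph) (x y : T.verts) (hxy : T.coe.Reachable x y)
    (e : (lineSub G S u T).verts) (he : e.1.1 ∈ T.edgeSet) (hxe : x.1 ∈ e.1.1) :
    ∀ f : (lineSub G S u T).verts, f.1.1 ∈ T.edgeSet → y.1 ∈ f.1.1 →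
      (lineSub G S u T).coe.Reachable e f := by
  rw [SimpleGraph.reachable_iff_reflTransGen] at hxy
  induction hxy with
  | refl => intro f hf hxf; exact lineSub_reach_same G S u T x.1 e f he hf hxe hxf
  | @tail y z _ hyz ih =>
    intro f hf hzf
    have hadj : T.Adj y.1 z.1 := hyz
    have hg : s(y.1, z.1) ∈ T.edgeSet := hadj
    let g : (lineSub G S u T).verts := ⟨⟨s(y.1, z.1), T.edgeSet_subset hg⟩, Or.inl hg⟩
    exact (ih g hg (Sym2.mem_mk_left _ _)).trans
      (lineSub_reach_same G S u T z.1 g f hg hf (Sym2.mem_mk_right _ _) hzf)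

lemma lineSub_connected (G : SimpleGraph V) (S : Set G.edgeSet) (hS : S.ncard = 3)
    (u : G.edgeSet → V) (hu : ∀ e ∈ S, u e ∈ e.1) (hinj : Set.InjOn u S)
    (T : G.Subgraph) (hT : T.coe.Connected) (hsub : u '' S ⊆ T.verts) :
    (lineSub G S u T).coe.Connected := by
  have hnt : Nontrivial T.verts := by
    have h3 : (u '' S).ncard = 3 := by rw [Set.ncard_image_of_injOn hinj, hS]
    obtain ⟨a, b, c, hab, -, -, h⟩ := Set.ncard_eq_three.mp h3
    rw [h] at hsub
    exact ⟨⟨a, hsub (by simp)⟩, ⟨b, hsub (by simp)⟩, fun h => hab (congrArg Subtype.val h)⟩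
  have hex : ∀ x : T.verts, ∃ g : (lineSub G S u T).verts, g.1.1 ∈ T.edgeSet ∧ x.1 ∈ g.1.1 := by
    intro x
    obtain ⟨y, hy⟩ := hT.preconnected.exists_adj_of_nontrivial x
    have hadj : T.Adj x.1 y.1 := hy
    have hg : s(x.1, y.1) ∈ T.edgeSet := hadj
    exact ⟨⟨⟨s(x.1, y.1), T.edgeSet_subset hg⟩, Or.inl hg⟩, hg, Sym2.mem_mk_left _ _⟩
  -- every vertex is linked to an edge of the tree
  have hlink : ∀ e : (lineSub G S u T).verts, ∃ g : (lineSub G S u T).verts,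
      g.1.1 ∈ T.edgeSet ∧ (lineSub G S u T).coe.Reachable e g := by
    intro e
    by_cases he : e.1.1 ∈ T.edgeSet
    · exact ⟨e, he, SimpleGraph.Reachable.refl _⟩
    · have heS : e.1 ∈ S := e.2.resolve_left he
      obtain ⟨g, hg, hxg⟩ := hex ⟨u e.1, hsub ⟨e.1, heS, rfl⟩⟩
      refine ⟨g, hg, SimpleGraph.Adj.reachable ?_⟩
      refine ⟨⟨fun h => he (h ▸ hg), u e.1, hu _ heS, hxg⟩, Or.inr (Or.inr ⟨hg, heS, hxg⟩)⟩
  have hmem : ∀ g : (lineSub G S u T).verts, g.1.1 ∈ T.edgeSet →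
      ∃ x : T.verts, x.1 ∈ g.1.1 := by
    rintro ⟨⟨g, hgG⟩, hgv⟩ hg
    induction g with | _ a b
    exact ⟨⟨a, T.edge_vert hg⟩, Sym2.mem_mk_left _ _⟩
  have hne : Nonempty (lineSub G S u T).verts := by
    obtain ⟨x⟩ := hT.nonempty
    exact ⟨(hex x).choose⟩
  refine ⟨fun e f => ?_⟩
  obtain ⟨e', he', hee'⟩ := hlink e
  obtain ⟨f', hf', hff'⟩ := hlink f
  obtain ⟨x, hx⟩ := hmem e' he'
  obtain ⟨y, hy⟩ := hmem f' hf'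
  exact hee'.trans ((lineSub_reach G S u T x y (hT.preconnected x y) e' he' hx f' hf' hy).trans
    hff'.symm)

/-- A connected subgraph has a spanning tree, as a subgraph. -/
lemma exists_spanning_subgraph {W : Type*} [Finite W] (L : SimpleGraph W) (H : L.Subgraph)
    (hH : H.coe.Connected) : ∃ T : L.Subgraph, T ≤ H ∧ T.verts = H.verts ∧ T.coe.IsTree := by
  obtain ⟨T, hle, hT⟩ := hH.exists_isTree_le
  let K : L.Subgraph :=
    { verts := H.verts
      Adj := fun a b => ∃ (ha : a ∈ H.verts) (hb : b ∈ H.verts), T.Adj ⟨a, ha⟩ ⟨b, hb⟩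
      adj_sub := by
        rintro a b ⟨ha, hb, h⟩
        exact H.adj_sub (hle h)
      edge_vert := by
        rintro a b ⟨ha, hb, h⟩
        exact ha
      symm := ⟨by
        rintro a b ⟨ha, hb, h⟩
        exact ⟨hb, ha, h.symm⟩⟩ }
  refine ⟨K, ⟨le_rfl, ?_⟩, rfl, ?_⟩
  · rintro a b ⟨ha, hb, h⟩
    exact hle h
  · have : K.coe = T := by
      ext a b
      exact ⟨fun ⟨_, _, h⟩ => h, fun h => ⟨a.2, b.2, h⟩⟩
    rw [this]
    exact hT

lemma packing_transfer [Finite V] (G : SimpleGraph V) (S : Set G.edgeSet) (hS : S.ncard = 3)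
    (u : G.edgeSet → V) (hu : ∀ e ∈ S, u e ∈ e.1) (hinj : Set.InjOn u S) (n : ℕ)
    (h : EdgeDisjointPacking G (u '' S) n) : InternallyDisjointPacking G.lineGraph S n := by
  obtain ⟨F, hF, hdis⟩ := h
  have hsp := fun i => exists_spanning_subgraph G.lineGraph (lineSub G S u (F i))
    (lineSub_connected G S hS u hu hinj (F i) (hF i).1.connected (hF i).2)
  choose K hK hKv hKt using hsp
  refine ⟨K, fun i => ⟨hKt i, ?_⟩, fun i j hij => ⟨?_, ?_⟩⟩
  · rw [hKv]
    exact Set.subset_union_right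
  · rw [Set.disjoint_left]
    intro p
    induction p with | _ e f
    intro h1 h2
    have h1 := (hK i).2 h1
    have h2 := (hK j).2 h2
    have hd : ∀ e : Sym2 V, e ∈ (F i).edgeSet → e ∈ (F j).edgeSet → False :=
      fun e h h' => Set.disjoint_left.mp (hdis i j hij) h h'
    obtain ⟨⟨hne, -⟩, h1⟩ := h1
    obtain ⟨-, h2⟩ := h2
    have hcon : ∀ e f : G.edgeSet, e ≠ f → e ∈ S → f ∈ S → u f ∈ e.1 → u e ∈ f.1 → False := by
      intro e f hne he hf h1 h2
      have hun : u e ≠ u f := fun h => hne (hinj he hf h)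
      apply hne
      apply Subtype.ext
      rw [(Sym2.mem_and_mem_iff hun).mp ⟨hu e he, h1⟩, (Sym2.mem_and_mem_iff hun).mp ⟨h2, hu f hf⟩]
    have a1 := hd e.1
    have a2 := hd f.1
    have a3 := hcon e f hne
    tauto
  · rw [hKv, hKv]
    ext e
    have hd : e.1 ∈ (F i).edgeSet → e.1 ∈ (F j).edgeSet → False :=
      fun h h' => Set.disjoint_left.mp (hdis i j hij) h h'
    simp only [lineSub, Set.mem_inter_iff, Set.mem_union, Set.mem_setOf_eq]
    tauto

lemma bddAbove_packing {W : Type*} [Finite W] (L : SimpleGraph W) (S : Set W)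
    (hS : S.ncard = 3) : BddAbove {n | InternallyDisjointPacking L S n} := by
  refine ⟨Nat.card (Sym2 W), ?_⟩
  rintro n ⟨F, hF, hdis⟩
  have hex : ∀ i, ∃ p, p ∈ (F i).edgeSet := by
    intro i
    obtain ⟨a, b, c, hab, -, -, h⟩ := Set.ncard_eq_three.mp hS
    have hsub := (hF i).2
    rw [h] at hsub
    have : Nontrivial (F i).verts :=
      ⟨⟨a, hsub (by simp)⟩, ⟨b, hsub (by simp)⟩, fun h => hab (congrArg Subtype.val h)⟩
    obtain ⟨y, hy⟩ := (hF i).1.connected.preconnected.exists_adj_of_nontrivial ⟨a, hsub (by simp)⟩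
    have hadj : (F i).Adj a y.1 := hy
    exact ⟨s(a, y.1), hadj⟩
  choose p hp using hex
  have hpi : Function.Injective p := by
    intro i j hij
    by_contra hne
    exact Set.disjoint_left.mp (hdis i j hne).1 (hp i) (hij ▸ hp j)
  simpa using Nat.card_le_card_of_injective p hpi

/-- If `G` is connected with at least `3` vertices and at least `3` edges,
then `κ_3(L(G)) ≥ λ_3(G)`. -/
theorem treeConn_three_lineGraph_ge_treeEdgeConn_three [Fintype V] (G : SimpleGraph V)
    (hG : G.Connected) (hv : 3 ≤ Fintype.card V) (he : 3 ≤ G.edgeSet.ncard) :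
    treeEdgeConn G 3 ≤ treeConn G.lineGraph 3 := by
  classical
  have hne : {m | ∃ S : Set G.edgeSet, S.ncard = 3 ∧ m = steinerKappa G.lineGraph S}.Nonempty := by
    obtain ⟨t, ht, h3⟩ := Set.exists_subset_card_eq he
    refine ⟨_, Subtype.val ⁻¹' t, ?_, rfl⟩
    rw [← Set.ncard_image_of_injective _ Subtype.val_injective, Subtype.image_preimage_coe,
      Set.inter_eq_right.mpr ht, h3]
  refine le_csInf hne ?_
  rintro m ⟨S, hS, rfl⟩
  obtain ⟨u, hu, hinj⟩ := exists_sdr G S hS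
  have h1 : treeEdgeConn G 3 ≤ steinerLambda G (u '' S) :=
    Nat.sInf_le ⟨u '' S, by rw [Set.ncard_image_of_injOn hinj, hS], rfl⟩
  refine h1.trans ?_
  refine csSup_le_csSup (bddAbove_packing _ S hS) ?_ ?_
  · exact ⟨0, fun i => i.elim0, fun i => i.elim0, fun i => i.elim0⟩
  · intro n hn
    exact packing_transfer G S hS u hu hinj n hn
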